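/- If the Kervaire conjecture holds for every nontrivial finitely presented group (i.e., for every nontrivial finitely presented group G, no single element of G * ℤ normally generates G * ℤ), then it holds for every nontrivial group: for every nontrivial group G, the free product G * ℤ is not of weight one. (Reduction of González-Acuña and Ramírez used by the paper.) -/

import Mathlib

open Monoid

/-- A group is finitely presented if it is isomorphic to a quotient of a finitely
generated free group by the normal closure of finitely many relators. -/
def IsFinitelyPresentedGroup (G : Type*) [Group G] : Prop :=
  ∃ (n : ℕ) (rels : Finset (FreeGroup (Fin n))),
    Nonempty ((FreeGroup (Fin n) ⧸
      Subgroup.normalClosure (rels : Set (FreeGroup (Fin n)))) ≃* G)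


namespace Kerv
open Filter

theorem ev {ι : Type*} (l : Filter ι) {Γ : Type*} [Group Γ] (Δ : ι → Type*) [∀ i, Group (Δ i)]
    (f : ∀ i, Γ →* Δ i) (w : Γ) (A : Set Γ)
    (hA : ∀ a ∈ A, ∀ᶠ i in l, f i a ∈ Subgroup.normalClosure {f i w}) (x : Γ)
    (hx : x ∈ Subgroup.normalClosure A) :
    ∀ᶠ i in l, f i x ∈ Subgroup.normalClosure {f i w} := by
  let K : Subgroup Γ :=
    { carrier := {x | ∀ᶠ i in l, f i x ∈ Subgroup.normalClosure {f i w}}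
      one_mem' := by simp [one_mem]
      mul_mem' := by
        intro a b ha hb
        filter_upwards [ha, hb] with i h1 h2
        rw [map_mul]; exact mul_mem h1 h2
      inv_mem' := by
        intro a ha
        filter_upwards [ha] with i h1
        rw [map_inv]; exact inv_mem h1 }
  have : K.Normal := ⟨by
    intro a ha u
    filter_upwards [ha] with i h1
    rw [map_mul, map_mul, map_inv]
    exact Subgroup.normalClosure_normal.conj_mem _ h1 _⟩
  exact (Subgroup.normalClosure_le_normal (N := K) hA) hx

abbrev Z := Multiplicative ℤ

theorem map_surj {F G : Type*} [Group F] [Group G] (p : F →* G) (hp : Function.Surjective p) :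
    Function.Surjective (Coprod.map p (MonoidHom.id Z)) := by
  intro x
  induction x using Coprod.induction_on with
  | inl m => obtain ⟨a, rfl⟩ := hp m; exact ⟨Coprod.inl a, by simp⟩
  | inr n => exact ⟨Coprod.inr n, by simp⟩
  | mul x y hx hy =>
    obtain ⟨a, rfl⟩ := hx; obtain ⟨b, rfl⟩ := hy; exact ⟨a * b, by simp⟩

theorem nc_top {F G : Type*} [Group F] [Group G] (p : F →* G) (hp : Function.Surjective p)
    (W : Coprod F Z)
    (hw : Subgroup.normalClosure {Coprod.map p (MonoidHom.id Z) W} = ⊤) :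
    Subgroup.normalClosure ({W} ∪ Coprod.inl '' (p.ker : Set F)) = ⊤ := by
  set N := Subgroup.normalClosure ({W} ∪ Coprod.inl '' (p.ker : Set F)) with hN
  let q := QuotientGroup.mk' N
  have hk : p.ker ≤ (q.comp Coprod.inl).ker := by
    intro a ha
    rw [MonoidHom.mem_ker, MonoidHom.comp_apply, ← MonoidHom.mem_ker, QuotientGroup.ker_mk']
    exact Subgroup.subset_normalClosure (Or.inr ⟨a, ha, rfl⟩)
  let r : G →* (Coprod F Z) ⧸ N :=
    p.liftOfRightInverse _ (Function.rightInverse_surjInv hp) ⟨q.comp Coprod.inl, hk⟩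
  have hr : r.comp p = q.comp Coprod.inl :=
    p.liftOfRightInverse_comp (Function.surjInv hp) (Function.rightInverse_surjInv hp) ⟨q.comp Coprod.inl, hk⟩
  let s : Coprod G Z →* (Coprod F Z) ⧸ N := Coprod.lift r (q.comp Coprod.inr)
  have hs : s.comp (Coprod.map p (MonoidHom.id Z)) = q := by
    apply Coprod.hom_ext
    · rw [← hr]; ext x; simp [s]
    · ext; simp [s]
  have h1 : s.ker = ⊤ := by
    rw [eq_top_iff, ← hw]
    apply Subgroup.normalClosure_le_normal
    rw [Set.singleton_subset_iff, SetLike.mem_coe, MonoidHom.mem_ker, ← MonoidHom.comp_apply, hs,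
      ← MonoidHom.mem_ker, QuotientGroup.ker_mk']
    exact Subgroup.subset_normalClosure (Or.inl rfl)
  rw [eq_top_iff]
  intro x _
  rw [← QuotientGroup.ker_mk' N, MonoidHom.mem_ker]
  change q x = 1
  rw [← hs, MonoidHom.comp_apply, ← MonoidHom.mem_ker, h1]
  trivial

/-- reduce a finitely generated group to a finitely presented one -/
theorem fg_to_fp (H : Type*) [Group H] [Nontrivial H] [Group.FG H]
    (w : Coprod H Z) (hw : Subgroup.normalClosure {w} = ⊤) :
    ∃ (n : ℕ) (R : Finset (FreeGroup (Fin n))),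
      Nontrivial (FreeGroup (Fin n) ⧸ Subgroup.normalClosure (R : Set (FreeGroup (Fin n)))) ∧
      ∃ w : Coprod (FreeGroup (Fin n) ⧸ Subgroup.normalClosure (R : Set (FreeGroup (Fin n)))) Z,
        Subgroup.normalClosure {w} = ⊤ := by
  classical
  obtain ⟨α, hα, p0, hp0⟩ := Group.fg_iff_exists_freeGroup_hom_surjective_finite.1 ‹Group.FG H›
  obtain ⟨n, ⟨e⟩⟩ := Finite.exists_equiv_fin α
  obtain ⟨p, hp⟩ : ∃ p : FreeGroup (Fin n) →* H, Function.Surjective p :=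
    ⟨p0.comp (FreeGroup.map e.symm), hp0.comp (FreeGroup.map_surjective e.symm.surjective)⟩
  obtain ⟨W, rfl⟩ := map_surj p hp w
  have ht := nc_top p hp W hw
  let rel : Finset p.ker → Set (FreeGroup (Fin n)) := fun R => (R.image Subtype.val : Finset _)
  let Q : Finset p.ker → Type := fun R => FreeGroup (Fin n) ⧸ Subgroup.normalClosure (rel R)
  let f : ∀ R : Finset p.ker, Coprod (FreeGroup (Fin n)) Z →* Coprod (Q R) Z :=
    fun R => Coprod.map (QuotientGroup.mk' (Subgroup.normalClosure (rel R))) (MonoidHom.id Z)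
  have key : ∀ x, ∀ᶠ R in atTop, f R x ∈ Subgroup.normalClosure {f R W} := by
    intro x
    refine ev atTop (fun R => Coprod (Q R) Z) f W _ ?_ x (ht ▸ Subgroup.mem_top x)
    rintro _ (rfl | ⟨a, ha, rfl⟩)
    · exact Eventually.of_forall fun R => Subgroup.subset_normalClosure rfl
    · filter_upwards [eventually_ge_atTop ({⟨a, ha⟩} : Finset p.ker)] with R hR
      have : f R (Coprod.inl a) = 1 := by
        simp only [f, Coprod.map_apply_inl]
        rw [← map_one Coprod.inl]
        congr 1
        rw [← MonoidHom.mem_ker, QuotientGroup.ker_mk']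
        apply Subgroup.subset_normalClosure
        have := hR (Finset.mem_singleton_self _)
        simp only [rel, Finset.coe_image]
        exact ⟨_, this, rfl⟩
      rw [this]; exact one_mem _
  have k1 : ∀ᶠ R in atTop, ∀ i : Fin n, f R (Coprod.inl (FreeGroup.of i)) ∈ Subgroup.normalClosure {f R W} :=
    eventually_all.2 fun i => key _
  obtain ⟨R, h1, h2⟩ := (k1.and (key (Coprod.inr (Multiplicative.ofAdd 1)))).exists
  refine ⟨n, R.image Subtype.val, ?_, f R W, ?_⟩
  · obtain ⟨a, ha⟩ := exists_ne (1 : H)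
    obtain ⟨b, rfl⟩ := hp a
    refine ⟨⟨QuotientGroup.mk b, 1, fun hb => ha ?_⟩⟩
    rw [QuotientGroup.eq_one_iff] at hb
    have : Subgroup.normalClosure (((R.image Subtype.val : Finset _)) : Set (FreeGroup (Fin n))) ≤ p.ker := by
      apply Subgroup.normalClosure_le_normal
      intro x hx
      simp only [Finset.coe_image] at hx
      obtain ⟨y, -, rfl⟩ := hx
      exact y.2
    exact this hb
  · have hsurj : Function.Surjective (f R) := map_surj _ (QuotientGroup.mk'_surjective _)
    have e1 : (QuotientGroup.mk' (Subgroup.normalClosure {f R W})).comp (f R) = 1 := by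
      apply Coprod.hom_ext
      · apply FreeGroup.ext_hom
        intro i
        exact (QuotientGroup.eq_one_iff _).2 (h1 i)
      · apply MonoidHom.ext_mint
        exact (QuotientGroup.eq_one_iff _).2 h2
    rw [eq_top_iff]
    intro x _
    obtain ⟨y, rfl⟩ := hsurj x
    exact (QuotientGroup.eq_one_iff _).1 (DFunLike.congr_fun e1 y)

end Kerv

namespace Kerv

abbrev J := Fin 5 ⊕ Unit
abbrev Y (B : Type) := B × ℕ × (J × ℕ)

def act (B : Type) : Equiv.Perm (B × J) →* Equiv.Perm (Y B) where
  toFun σ :=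
    { toFun := fun y => ((σ (y.1, y.2.2.1)).1, y.2.1, ((σ (y.1, y.2.2.1)).2, y.2.2.2))
      invFun := fun y => ((σ⁻¹ (y.1, y.2.2.1)).1, y.2.1, ((σ⁻¹ (y.1, y.2.2.1)).2, y.2.2.2))
      left_inv := fun y => by simp
      right_inv := fun y => by simp }
  map_one' := by ext y <;> simp
  map_mul' σ τ := by ext y <;> simp

theorem act_apply (B : Type) (σ : Equiv.Perm (B × J)) (y : Y B) : act B σ y =
    ((σ (y.1, y.2.2.1)).1, y.2.1, ((σ (y.1, y.2.2.1)).2, y.2.2.2)) := rfl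

def rho (B : Type) : (B → Equiv.Perm (J × ℕ)) →* Equiv.Perm (Y B) where
  toFun f :=
    { toFun := fun y => (y.1, y.2.1, f y.1 y.2.2)
      invFun := fun y => (y.1, y.2.1, (f y.1)⁻¹ y.2.2)
      left_inv := fun y => by simp
      right_inv := fun y => by simp }
  map_one' := by ext y <;> simp
  map_mul' σ τ := by ext y <;> simp

theorem rho_apply (B : Type) (f : B → Equiv.Perm (J × ℕ)) (y : Y B) : rho B f y =
    (y.1, y.2.1, f y.1 y.2.2) := rfl

def theta : Y Bool ≃ Y (Option Bool) where
  toFun y := match y with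
    | (true, i, x) =>
      (some (Equiv.boolProdNatEquivNat.symm i).1, (Equiv.boolProdNatEquivNat.symm i).2, x)
    | (false, i, x) => (none, i, x)
  invFun y := match y with
    | (some b, i, x) => (true, Equiv.boolProdNatEquivNat (b, i), x)
    | (none, i, x) => (false, i, x)
  left_inv := by rintro ⟨_ | _, i, x⟩ <;> simp
  right_inv := by rintro ⟨_ | b, i, x⟩ <;> simp

def Th : Equiv.Perm (Y (Option Bool)) →* Equiv.Perm (Y Bool) :=
  (theta.symm.permCongrHom).toMonoidHom

theorem Th_apply (σ : Equiv.Perm (Y (Option Bool))) (y : Y Bool) :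
    Th σ y = theta.symm (σ (theta y)) := rfl

theorem rho_theta (f : Bool → Equiv.Perm (J × ℕ)) :
    rho Bool f = Th (rho (Option Bool) (fun o => f o.isSome)) := by
  ext1 y
  obtain ⟨_ | _, i, x⟩ := y <;> simp [Th_apply, rho_apply, theta]

theorem act_theta (v : Equiv.Perm J) :
    act Bool (Equiv.Perm.prodExtendRight false v) =
      Th (act (Option Bool) (Equiv.Perm.prodExtendRight none v)) := by
  ext1 y
  obtain ⟨_ | _, i, x⟩ := y <;>
   simp [Th_apply, act_apply, theta, Equiv.Perm.prodExtendRight]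

theorem act_rho (B : Type) (τ : Equiv.Perm B) (f : B → Equiv.Perm (J × ℕ)) :
    act B (Equiv.prodCongr τ (1 : Equiv.Perm J)) * rho B f *
      (act B (Equiv.prodCongr τ (1 : Equiv.Perm J)))⁻¹ = rho B (fun b => f (τ⁻¹ b)) := by
  rw [mul_inv_eq_iff_eq_mul]
  ext1 y
  simp [act_apply, rho_apply]

theorem sgn (B : Type) [Fintype B] [DecidableEq B] (τ : Equiv.Perm B) :
   (Equiv.prodCongr τ (1 : Equiv.Perm J)) ∈ alternatingGroup (B × J) := by
  have : Equiv.prodCongr τ (1 : Equiv.Perm J) = Equiv.prodCongrLeft (fun _ : J => τ) := by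
    ext1 y; rfl
  rw [Equiv.Perm.mem_alternatingGroup, this, Equiv.Perm.sign_prodCongrLeft]
  simp
  obtain h | h := Int.units_eq_one_or (Equiv.Perm.sign τ) <;> rw [h] <;> rfl

def v5 : Equiv.Perm J := Equiv.swap (.inl 0) (.inl 1) * Equiv.swap (.inl 1) (.inl 2)
def w5 : Equiv.Perm J := Equiv.swap (.inl 0) (.inl 1) * Equiv.swap (.inl 1) (.inl 3)
theorem v5_ne : v5 ≠ 1 := by decide
theorem v5_inr : v5 (.inr ()) = .inr () := by decide
theorem w5_inr : w5 (.inr ()) = .inr () := by decide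
theorem sv5 : Equiv.Perm.sign v5 = 1 := by decide
theorem sw5 : Equiv.Perm.sign w5 = 1 := by decide
theorem v5w5 : v5 * w5 * v5⁻¹ * w5⁻¹ ≠ 1 := by decide

theorem ext_mul (B : Type) [DecidableEq B] (b : B) (v w : Equiv.Perm J) :
    Equiv.Perm.prodExtendRight b (v * w) =
      Equiv.Perm.prodExtendRight b v * Equiv.Perm.prodExtendRight b w := by
  ext1 ⟨c, j⟩
  by_cases h : c = b <;> simp [Equiv.Perm.prodExtendRight, h]

theorem ext_inv (B : Type) [DecidableEq B] (b : B) (v : Equiv.Perm J) :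
    Equiv.Perm.prodExtendRight b v⁻¹ = (Equiv.Perm.prodExtendRight b v)⁻¹ := by
  rw [eq_inv_iff_mul_eq_one, ← ext_mul, inv_mul_cancel]
  ext1 ⟨c, j⟩
  by_cases h : c = b <;> simp [Equiv.Perm.prodExtendRight, h]

theorem ext_ne (B : Type) [DecidableEq B] (b : B) (v : Equiv.Perm J) (hv : v ≠ 1) :
    Equiv.Perm.prodExtendRight b v ≠ 1 := by
  intro h
  apply hv
  ext1 j
  have := congrArg Prod.snd (DFunLike.congr_fun h (b, j))
  simpa using this

theorem ext_mem (B : Type) [Fintype B] [DecidableEq B] (b : B) (v : Equiv.Perm J)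
    (hv : Equiv.Perm.sign v = 1) :
    Equiv.Perm.prodExtendRight b v ∈ alternatingGroup (B × J) := by
  rw [Equiv.Perm.mem_alternatingGroup, Equiv.Perm.sign_prodExtendRight, hv]

/-- a good action of a countable group on `J × ℕ`. -/
theorem exists_alpha (G : Type*) [Group G] [Countable G] (g : G) (hg : g ≠ 1) :
    ∃ α : G →* Equiv.Perm (J × ℕ), ∀ i n, (α g (Sum.inl i, n)).1 = Sum.inr () := by
  classical
  let P : G × ℕ → Prop := fun x => x.1 = 1
  have i1 : Infinite {x // P x} :=
    Infinite.of_injective (fun n : ℕ => (⟨(1, n), rfl⟩ : {x // P x})) (by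
      intro a b h; simpa using h)
  have i2 : Infinite {x // ¬ P x} :=
    Infinite.of_injective (fun n : ℕ => (⟨(g, n), hg⟩ : {x // ¬ P x})) (by
      intro a b h; simpa using h)
  obtain ⟨e1⟩ : Nonempty (Fin 5 × ℕ ≃ {x // P x}) := inferInstance
  obtain ⟨e2⟩ : Nonempty (Unit × ℕ ≃ {x // ¬ P x}) := inferInstance
  let e : J × ℕ ≃ G × ℕ :=
    (Equiv.sumProdDistrib _ _ _).trans ((Equiv.sumCongr e1 e2).trans (Equiv.sumCompl P))
  let β : G →* Equiv.Perm (G × ℕ) :=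
    { toFun := fun h => Equiv.prodCongr (Equiv.mulLeft h) (Equiv.refl ℕ)
      map_one' := by ext1 x; simp
      map_mul' := fun a b => by ext1 x; simp [mul_assoc]; rfl }
  have hP : ∀ x, P x → e.symm (β g x) ∈ {y : J × ℕ | y.1 = Sum.inr ()} := by
    intro x hx
    have : ¬ P (β g x) := by
      simp only [P, β] at hx ⊢
      simpa [hx] using hg
    obtain ⟨y, hy⟩ := e2.surjective ⟨_, this⟩
    have : e.symm (β g x) = (Sum.inr y.1, y.2) := by
      rw [Equiv.symm_apply_eq]
      simp [e, hy]
    rw [this]; rfl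
  refine ⟨e.symm.permCongrHom.toMonoidHom.comp β, fun i n => ?_⟩
  apply hP
  have : e (Sum.inl i, n) = (e1 (i, n)).1 := by simp [e]
  change P (e (Sum.inl i, n))
  rw [this]
  exact (e1 (i, n)).2

theorem conj_lemma {M : Type*} [Group M] (H N : Subgroup M)
    (hN : ∀ a ∈ H, ∀ n ∈ N, a * n * a⁻¹ ∈ N) (x t : M) (hx : x ∈ H) (ht : t ∈ N) :
    x⁻¹ * (t * x * t⁻¹) ∈ N := by
  have := N.mul_mem (hN x⁻¹ (inv_mem hx) t ht) (inv_mem ht)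
  simpa [mul_assoc] using this

theorem kill {M : Type*} [Group M] (H N : Subgroup M)
    (hN : ∀ a ∈ H, ∀ n ∈ N, a * n * a⁻¹ ∈ N) (x s y z : M) (hs : s ∈ H)
    (h1 : x⁻¹ * s ∈ N) (h2 : s⁻¹ * y ∈ N) (h3 : s⁻¹ * z ∈ N) (h : x = y * z) : x ∈ N := by
  have a1 : s⁻¹ * (s⁻¹ * y) * s ∈ N := by simpa using hN s⁻¹ (inv_mem hs) _ h2
  have a2 : s⁻¹ * x ∈ N := by simpa using inv_mem h1
  have a3 : s⁻¹ * s⁻¹ * x ∈ N := by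
    have := mul_mem a1 h3
    rw [h]; simpa [mul_assoc] using this
  have a4 : s ∈ N := by
    have := mul_mem a2 (inv_mem a3)
    simpa [mul_assoc] using this
  simpa using mul_mem a4 a2

theorem alt_le (B : Type) [Fintype B] [DecidableEq B] [Nonempty B] {M : Type*} [Group M]
    (f : Equiv.Perm (B × J) →* M) (H N : Subgroup M)
    (hN : ∀ a ∈ H, ∀ n ∈ N, a * n * a⁻¹ ∈ N) (hH : (alternatingGroup (B × J)).map f ≤ H)
    (a : Equiv.Perm (B × J)) (ha : a ∈ alternatingGroup (B × J)) (ha1 : a ≠ 1)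
    (haN : f a ∈ N) : (alternatingGroup (B × J)).map f ≤ N := by
  let K : Subgroup (alternatingGroup (B × J)) := N.comap (f.comp (Subgroup.subtype _))
  have hK : K.Normal := ⟨fun n hn c => by
    have := hN (f c) (hH ⟨c, c.2, rfl⟩) _ hn
    simpa [K] using this⟩
  have hc : 5 ≤ Nat.card (B × J) := by
    have : 0 < Nat.card B := Nat.card_pos
    simp at *
    omega
  obtain h | h := alternatingGroup.normal_subgroup_eq_bot_or_eq_top hc (N := K)
  · have : (⟨a, ha⟩ : alternatingGroup (B × J)) ∈ K := haN
    rw [h, Subgroup.mem_bot] at this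
    exact absurd (congrArg Subtype.val this) ha1
  · rintro _ ⟨c, hc, rfl⟩
    have : (⟨c, hc⟩ : alternatingGroup (B × J)) ∈ K := h ▸ Subgroup.mem_top _
    exact this

theorem main_perm (G : Type*) [Group G] [Countable G] (g : G) (hg : g ≠ 1) :
    ∃ (φ : G →* Equiv.Perm (Y Bool)) (T : Subgroup (Equiv.Perm (Y Bool))), T.FG ∧ φ g ≠ 1 ∧
      ∀ N : Subgroup (Equiv.Perm (Y Bool)),
        (∀ a ∈ T ⊔ φ.range, ∀ n ∈ N, a * n * a⁻¹ ∈ N) → φ g ∈ N → T ⊔ φ.range ≤ N := by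
  obtain ⟨α, hα⟩ := exists_alpha G g hg
  let inc : Equiv.Perm (J × ℕ) →* (Bool → Equiv.Perm (J × ℕ)) :=
    { toFun := fun σ b => if b then σ else 1
      map_one' := by ext1 b; simp
      map_mul' := fun x y => by ext1 b; cases b <;> simp }
  let φ : G →* Equiv.Perm (Y Bool) := (rho Bool).comp (inc.comp α)
  let act' := Th.comp (act (Option Bool))
  let T1 := (alternatingGroup (Bool × J)).map (act Bool)
  let T2 := (alternatingGroup (Option Bool × J)).map act'
  have hφ : ∀ h b i x, φ h (b, i, x) = (b, i, (if b then α h else 1) x) := fun _ _ _ _ => rfl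
  have fg1 : T1.FG := by
    have : Finite T1 := ((Set.toFinite (SetLike.coe (alternatingGroup (Bool × J)))).image
      (act Bool)).to_subtype
    exact (Group.fg_iff_subgroup_fg _).1 inferInstance
  have fg2 : T2.FG := by
    have : Finite T2 := ((Set.toFinite (SetLike.coe (alternatingGroup (Option Bool × J)))).image
      act').to_subtype
    exact (Group.fg_iff_subgroup_fg _).1 inferInstance
  refine ⟨φ, T1 ⊔ T2, fg1.sup fg2, ?_, ?_⟩
  · intro h
    have h2 := DFunLike.congr_fun h (true, 0, (Sum.inl 0, 0))
    rw [hφ] at h2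
    have h3 := hα 0 0
    have h4 := congrArg (fun y : Y Bool => y.2.2.1) h2
    simp only [if_true, Equiv.Perm.one_apply] at h4
    rw [h3] at h4
    exact absurd h4 (by simp)
  intro N hN hgN
  set H := T1 ⊔ T2 ⊔ φ.range with hH
  have hT1 : T1 ≤ H := le_sup_left.trans le_sup_left
  have hT2 : T2 ≤ H := le_sup_right.trans le_sup_left
  let v := Equiv.Perm.prodExtendRight true v5
  let w := Equiv.Perm.prodExtendRight true w5
  have hv : v ∈ alternatingGroup (Bool × J) := ext_mem _ _ _ sv5
  have hw : w ∈ alternatingGroup (Bool × J) := ext_mem _ _ _ sw5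
  have hc1 : v * w * v⁻¹ * w⁻¹ ≠ 1 := by
    simp only [v, w, ← ext_inv, ← ext_mul]
    exact ext_ne _ _ _ v5w5
  have supp : ∀ u : Equiv.Perm J, u (.inr ()) = .inr () → ∀ y : Y Bool,
      act Bool (Equiv.Perm.prodExtendRight true u) y ≠ y → y.1 = true ∧ ∃ i, y.2.2.1 = Sum.inl i := by
    rintro u hu ⟨b, n, (j | j), m⟩ hy
    · refine ⟨?_, j, rfl⟩
      by_contra hb
      simp only [Bool.not_eq_true] at hb
      subst hb
      exact hy (by simp [act_apply, Equiv.Perm.prodExtendRight])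
    · exfalso; apply hy
      cases b <;> simp [act_apply, Equiv.Perm.prodExtendRight, hu]
  have hcomm : Commute (φ g * (act Bool v)⁻¹ * (φ g)⁻¹) (act Bool w) := by
    apply Equiv.Perm.Disjoint.commute
    intro y
    by_contra! hy
    obtain ⟨h1, h2⟩ := hy
    obtain ⟨hb, i, hi⟩ := supp w5 w5_inr y h2
    obtain ⟨z, rfl⟩ := (φ g).surjective y
    have h3 : act Bool v z ≠ z := by
      intro h; apply h1
      have : (Equiv.symm (act Bool v)) z = z := by rw [Equiv.symm_apply_eq, h]
      simp [this]
    obtain ⟨hb', i', hi'⟩ := supp v5 v5_inr z h3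
    obtain ⟨b, n, j, m⟩ := z
    simp only at hb' hi'
    subst hb' hi'
    rw [hφ] at hi
    simp only [if_true] at hi
    rw [hα] at hi
    exact absurd hi (by simp)
  have hT1N : T1 ≤ N := by
    refine alt_le Bool (act Bool) H N hN hT1 _
      (mul_mem (mul_mem (mul_mem hv hw) (inv_mem hv)) (inv_mem hw)) hc1 ?_
    have hV : act Bool v ∈ H := hT1 ⟨v, hv, rfl⟩
    have hW : act Bool w ∈ H := hT1 ⟨w, hw, rfl⟩
    have n1 := N.mul_mem (hN _ hV _ hgN) (inv_mem hgN)
    have n2 := N.mul_mem n1 (hN _ hW _ (inv_mem n1))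
    have hc := hcomm.eq
    simp only [map_mul, map_inv]
    convert n2 using 1
    generalize act Bool v = V at *
    generalize act Bool w = W at *
    generalize φ g = a at *
    have : V * a * V⁻¹ * a⁻¹ * (W * (V * a * V⁻¹ * a⁻¹)⁻¹ * W⁻¹) =
      V * ((a * V⁻¹ * a⁻¹) * W) * (a * V⁻¹ * a⁻¹)⁻¹ * V⁻¹ * W⁻¹ := by group
    rw [this, hc]; group
  have hT2N : T2 ≤ N := by
    refine alt_le (Option Bool) act' H N hN hT2 _ (ext_mem _ none _ sv5) (ext_ne _ _ _ v5_ne) ?_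
    change Th _ ∈ N
    rw [← act_theta]
    exact hT1N ⟨_, ext_mem _ _ _ sv5, rfl⟩
  refine sup_le (sup_le hT1N hT2N) ?_
  rintro _ ⟨h, rfl⟩
  have hx : φ h ∈ H := (le_sup_right : φ.range ≤ H) ⟨h, rfl⟩
  let t1 := act Bool (Equiv.prodCongr (Equiv.swap true false) (1 : Equiv.Perm J))
  have ht1 : t1 ∈ T1 := ⟨_, sgn _ _, rfl⟩
  let t2 : Bool → Equiv.Perm (Y Bool) := fun b =>
    act' (Equiv.prodCongr (Equiv.swap none (some b)) (1 : Equiv.Perm J))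
  have ht2 : ∀ b, t2 b ∈ T2 := fun b => ⟨_, sgn _ _, rfl⟩
  let s := t1 * φ h * t1⁻¹
  have hs : s ∈ H := mul_mem (mul_mem (hT1 ht1) hx) (inv_mem (hT1 ht1))
  refine kill H N hN (φ h) s (t2 true * s * (t2 true)⁻¹) (t2 false * s * (t2 false)⁻¹) hs
    (conj_lemma H N hN _ _ hx (hT1N ht1)) (conj_lemma H N hN _ _ hs (hT2N (ht2 _)))
    (conj_lemma H N hN _ _ hs (hT2N (ht2 _))) ?_
  have es : s = Th (rho (Option Bool) (fun o => if o = none then α h else 1)) := by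
    change act Bool _ * rho Bool _ * (act Bool _)⁻¹ = _
    rw [act_rho, rho_theta]
    congr 2
    ext1 o
    rcases o with _ | b <;> simp [inc]
  have et : ∀ b, t2 b * s * (t2 b)⁻¹ =
      Th (rho (Option Bool) (fun o => if o = some b then α h else 1)) := by
    intro b
    rw [es]
    change Th _ * Th _ * (Th _)⁻¹ = _
    rw [← map_inv, ← map_mul, ← map_mul, act_rho]
    congr 2
    ext1 o
    rcases o with _ | c
    · simp
    · cases b <;> cases c <;> simp [Equiv.swap_apply_def]
  rw [et, et, ← map_mul, ← map_mul]
  change rho Bool _ = _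
  rw [rho_theta]
  congr 2
  ext1 o
  rcases o with _ | b
  · simp [inc]
  · cases b <;> simp [inc]

end Kerv

namespace Kerv
open Filter

theorem conj_ker {M P : Type*} [Group M] [Group P] (H : Subgroup M) (r : H →* P) (a : M)
    (ha : a ∈ H) (n : H) (hn : n ∈ r.ker) : a * (H.subtype n) * a⁻¹ ∈ r.ker.map H.subtype := by
  have h := (MonoidHom.normal_ker r).conj_mem n hn ⟨a, ha⟩
  exact ⟨_, h, rfl⟩

theorem part_two {A M : Type*} [Group A] [Group M] (φ : A →* M) (H : Subgroup M)
    (hφH : ∀ x, φ x ∈ H) (W : Coprod A Z)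
    (h1 : Coprod.inr (Multiplicative.ofAdd 1) ∈ Subgroup.normalClosure {W})
    (hmain : ∀ N : Subgroup M, (∀ a ∈ H, ∀ n ∈ N, a * n * a⁻¹ ∈ N) →
      φ (Coprod.fst W) ∈ N → H ≤ N) :
    Subgroup.normalClosure {Coprod.map (φ.codRestrict H hφH) (MonoidHom.id Z) W} = ⊤ := by
  let φ' : A →* H := φ.codRestrict H hφH
  let k : Coprod A Z →* Coprod H Z := Coprod.map φ' (MonoidHom.id Z)
  change Subgroup.normalClosure {k W} = ⊤
  set K := Subgroup.normalClosure {k W} with hK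
  let Q := QuotientGroup.mk' K
  have t1 : Q (Coprod.inr (Multiplicative.ofAdd 1)) = 1 := by
    have : k (Coprod.inr (Multiplicative.ofAdd 1)) ∈ K := by
      have h3 := Subgroup.mem_map_of_mem k h1
      have h4 := Subgroup.map_normalClosure_le {W} k h3
      rwa [Set.image_singleton] at h4
    simp only [k, Coprod.map_apply_inr, MonoidHom.id_apply] at this
    exact (QuotientGroup.eq_one_iff _).2 this
  have t2 : Q.comp Coprod.inr = 1 := by
    apply MonoidHom.ext_mint
    exact t1
  have t3 : Q = (Q.comp Coprod.inl).comp Coprod.fst := by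
    apply Coprod.hom_ext
    · refine MonoidHom.ext fun x => ?_
      simp
    · rw [t2]
      refine MonoidHom.ext fun x => ?_
      simp
  have g1 : (Q.comp Coprod.inl) (φ' (Coprod.fst W)) = 1 := by
    have a1 : Q (k W) = 1 :=
      (QuotientGroup.eq_one_iff _).2 (Subgroup.subset_normalClosure rfl)
    rw [t3] at a1
    have a2 : Coprod.fst (k W) = φ' (Coprod.fst W) := by
      have : Coprod.fst.comp k = φ'.comp Coprod.fst := by
        apply Coprod.hom_ext
        · refine MonoidHom.ext fun x => ?_
          simp [k]
        · refine MonoidHom.ext fun x => ?_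
          simp [k]
      exact DFunLike.congr_fun this W
    rw [MonoidHom.comp_apply, a2] at a1
    exact a1
  let N := ((Q.comp Coprod.inl).ker).map H.subtype
  have hle : H ≤ N := by
    apply hmain N
    · rintro a ha _ ⟨n, hn, rfl⟩
      exact conj_ker H _ a ha n hn
    · exact ⟨φ' (Coprod.fst W), g1, rfl⟩
  have l1 : Q.comp Coprod.inl = 1 := by
    refine MonoidHom.ext fun x => ?_
    obtain ⟨y, hy, hxy⟩ := hle x.2
    have : y = x := Subtype.ext hxy
    subst this
    exact hy
  have l2 : Q = 1 := by rw [t3, l1]; rfl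
  rw [eq_top_iff]
  intro x _
  exact (QuotientGroup.eq_one_iff _).1 (DFunLike.congr_fun l2 x)

theorem weight_fg (G : Type*) [Group G] [Nontrivial G] (w : Coprod G Z)
    (hw : Subgroup.normalClosure {w} = ⊤) :
    ∃ (H : Subgroup (Equiv.Perm (Y Bool))), Nontrivial H ∧ Group.FG H ∧
      ∃ w : Coprod H Z, Subgroup.normalClosure {w} = ⊤ := by
  classical
  let p : FreeGroup G →* G := FreeGroup.lift id
  have hp : Function.Surjective p := fun a => ⟨FreeGroup.of a, by simp [p]⟩
  obtain ⟨W, rfl⟩ := map_surj p hp w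
  have ht := nc_top p hp W hw
  let psi : Finset G → (FreeGroup G →* G) := fun S => FreeGroup.lift (fun a => if a ∈ S then a else 1)
  have hpsi : ∀ x, ∀ᶠ S in atTop, psi S x = p x := by
    intro x
    induction x using FreeGroup.induction_on with
    | C1 => simp
    | of a =>
      filter_upwards [eventually_ge_atTop ({a} : Finset G)] with S hS
      have : a ∈ S := hS (Finset.mem_singleton_self _)
      simp [psi, p, this]
    | inv_of a h => filter_upwards [h] with S hS; rw [map_inv, map_inv, hS]
    | mul a b ha hb => filter_upwards [ha, hb] with S h1 h2; rw [map_mul, map_mul, h1, h2]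
  let f : ∀ S, Coprod (FreeGroup G) Z →* Coprod (psi S).range Z :=
    fun S => Coprod.map (psi S).rangeRestrict (MonoidHom.id Z)
  have key : ∀ x, ∀ᶠ S in atTop, f S x ∈ Subgroup.normalClosure {f S W} := by
    intro x
    refine ev atTop (fun S => Coprod (psi S).range Z) f W _ ?_ x (ht ▸ Subgroup.mem_top x)
    rintro _ (rfl | ⟨a, ha, rfl⟩)
    · exact Eventually.of_forall fun R => Subgroup.subset_normalClosure rfl
    · filter_upwards [hpsi a] with S hS
      have : f S (Coprod.inl a) = 1 := by
        simp only [f, Coprod.map_apply_inl]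
        rw [← map_one Coprod.inl]
        congr 1
        ext
        rw [MonoidHom.coe_rangeRestrict, hS]
        exact ha
      rw [this]; exact one_mem _
  let W1 : FreeGroup G := Coprod.fst W
  have hW1 : p W1 ≠ 1 := by
    intro h1
    let q : Coprod G Z →* G := Coprod.fst
    have e : ∀ x, q (Coprod.map p (MonoidHom.id Z) x) = p (Coprod.fst x) := by
      intro x
      have : q.comp (Coprod.map p (MonoidHom.id Z)) = p.comp Coprod.fst := by
        apply Coprod.hom_ext <;> ext <;> simp [q]
      exact DFunLike.congr_fun this x
    have : q.ker = ⊤ := by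
      rw [eq_top_iff, ← hw]
      apply Subgroup.normalClosure_le_normal
      rw [Set.singleton_subset_iff, SetLike.mem_coe, MonoidHom.mem_ker, e, h1]
    obtain ⟨a, ha⟩ := exists_ne (1 : G)
    apply ha
    have : Coprod.inl a ∈ q.ker := this ▸ Subgroup.mem_top _
    simpa [q, MonoidHom.mem_ker] using this
  obtain ⟨S, h1, h2⟩ := ((key (Coprod.inr (Multiplicative.ofAdd 1))).and (hpsi W1)).exists
  have hfin : (Set.range (fun a : G => if a ∈ S then a else 1)).Finite := by
    refine ((S : Set G).toFinite.union (Set.finite_singleton 1)).subset ?_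
    rintro _ ⟨a, rfl⟩
    by_cases h : a ∈ S <;> simp [h]
  have hfg : (psi S).range.FG := by
    rw [Subgroup.fg_iff]
    exact ⟨_, (FreeGroup.range_lift_eq_closure).symm, hfin⟩
  have hfg' : Group.FG (psi S).range := (Group.fg_iff_subgroup_fg _).2 hfg
  have hcount : Countable (psi S).range := by
    obtain ⟨α, hα, p0, hp0⟩ := Group.fg_iff_exists_freeGroup_hom_surjective_finite.1 hfg'
    exact hp0.countable
  let g : (psi S).range := (psi S).rangeRestrict W1
  have hg : g ≠ 1 := by
    intro h
    apply hW1
    rw [← h2]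
    exact congrArg Subtype.val h
  obtain ⟨φ, T, hT, hφg, hmain⟩ := main_perm _ g hg
  let H := T ⊔ φ.range
  have hφH : ∀ x, φ x ∈ H := fun x => (le_sup_right : φ.range ≤ H) ⟨x, rfl⟩
  have hrfg : φ.range.FG := (Group.fg_iff_subgroup_fg _).1 (Group.fg_range φ)
  have hgW : g = Coprod.fst (f S W) := by
    have : ((psi S).rangeRestrict).comp Coprod.fst = Coprod.fst.comp (f S) := by
      apply Coprod.hom_ext
      · refine MonoidHom.ext fun x => ?_
        simp [f]
      · refine MonoidHom.ext fun x => ?_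
        simp [f]
    exact DFunLike.congr_fun this W
  refine ⟨H, ⟨⟨⟨φ g, hφH g⟩, 1, fun h => hφg (congrArg Subtype.val h)⟩⟩,
    (Group.fg_iff_subgroup_fg _).2 (hT.sup hrfg),
    Coprod.map (φ.codRestrict H hφH) (MonoidHom.id Z) (f S W), ?_⟩
  refine part_two φ H hφH (f S W) ?_ ?_
  · simpa [f] using h1
  · rw [← hgW]; exact hmain

end Kerv

/-- González-Acuña–Ramírez reduction: if the Kervaire conjecture holds for every
nontrivial finitely presented group, then it holds for every nontrivial group. -/
theorem kervaire_of_finitelyPresented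
    (h : ∀ (G : Type u) [Group G], Nontrivial G → IsFinitelyPresentedGroup G →
      ¬ ∃ w : Coprod G (Multiplicative ℤ),
        Subgroup.normalClosure ({w} : Set (Coprod G (Multiplicative ℤ))) = ⊤) :
    ∀ (G : Type u) [Group G], Nontrivial G →
      ¬ ∃ w : Coprod G (Multiplicative ℤ),
        Subgroup.normalClosure ({w} : Set (Coprod G (Multiplicative ℤ))) = ⊤ := by
  intro G _ hG ⟨w, hw⟩
  obtain ⟨H, hH, hfg, w1, hw1⟩ := Kerv.weight_fg G w hw
  obtain ⟨n, R, hnt, w2, hw2⟩ := Kerv.fg_to_fp H w1 hw1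
  let P := FreeGroup (Fin n) ⧸ Subgroup.normalClosure (R : Set (FreeGroup (Fin n)))
  let e : P ≃* ULift.{u} P := MulEquiv.ulift.symm
  refine h (ULift.{u} P) e.symm.toEquiv.nontrivial ⟨n, R, ⟨e⟩⟩
    ⟨Coprod.map e.toMonoidHom (MonoidHom.id _) w2, ?_⟩
  have hs := Kerv.map_surj e.toMonoidHom e.surjective
  have := Subgroup.map_normalClosure {w2} _ hs
  rw [hw2, Set.image_singleton] at this
  rw [← this]
  exact Subgroup.map_top_of_surjective _ hs
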